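/- arXiv:2307.12703 — 2 statements merged into one kernel-verified Lean document; each statement's English description precedes it below -/
import Mathlib

section
/- Let k ≥ 1 and let g : ℝ → ℝ be (k+1)-times continuously differentiable such that g and all of its derivatives up to order k+1 have at most polynomial growth. Then the function φ_g is k-times differentiable on (−1,1) and its k-th derivative is given by φ_g^{(k)}(ρ) = ∫∫ g^{(k)}(x) g^{(k)}(ρx + √(1−ρ²) y) dγ(x) dγ(y) for every ρ ∈ (−1,1). -/
open MeasureTheory ProbabilityTheory

/-- `h` has at most polynomial growth. -/
def PolyGrowth (h : ℝ → ℝ) : Prop :=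
  ∃ C > (0 : ℝ), ∃ m : ℕ, ∀ x : ℝ, |h x| ≤ C * (1 + |x|) ^ m

/-- The correlation functional `φ_g`. -/
noncomputable def phiCorr (g : ℝ → ℝ) (ρ : ℝ) : ℝ :=
  ∫ x, ∫ y, g x * g (ρ * x + Real.sqrt (1 - ρ ^ 2) * y)
    ∂(gaussianReal 0 1) ∂(gaussianReal 0 1)

/-!
Substitute `ρ = cos θ`, so that `φ_g(cos θ) = E[g(X) g(Z)]`, where `(Z, W)` is the rotation by `θ`
of a standard Gaussian pair `(X, Y)`. Since `∂Z/∂θ = W`, the derivative in `θ` is `E[g(X) g'(Z) W]`.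
The pair `(Z, W)` is again standard Gaussian and `X = cos θ Z - sin θ W`, so Stein's identity in `W`
turns this into `-sin θ E[g'(X) g'(Z)]`, and the chain rule cancels the factor `-sin θ = dρ/dθ`.
-/

open ContinuousLinearMap (rotation)

/-- Polynomial growth of the functions `F i` on a normed space, with a constant and an exponent that
do not depend on the index `i`. -/
def UniformPolyGrowth {ι E : Type*} [Norm E] (F : ι → E → ℝ) : Prop :=
  ∃ C > (0 : ℝ), ∃ m : ℕ, ∀ i x, |F i x| ≤ C * (1 + ‖x‖) ^ m

namespace UniformPolyGrowth

variable {ι E : Type*} [NormedAddCommGroup E] {F G : ι → E → ℝ}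

lemma of_abs_le_mul_norm {K : ℝ} (hF : ∀ i x, |F i x| ≤ K * ‖x‖) : UniformPolyGrowth F := by
  refine ⟨1 + |K|, by positivity, 1, fun i x => (hF i x).trans ?_⟩
  rw [pow_one]
  gcongr
  · linarith [le_abs_self K]
  · linarith

lemma mul (hF : UniformPolyGrowth F) (hG : UniformPolyGrowth G) :
    UniformPolyGrowth fun i x => F i x * G i x := by
  obtain ⟨C, hC, m, hF⟩ := hF
  obtain ⟨D, hD, n, hG⟩ := hG
  refine ⟨C * D, by positivity, m + n, fun i x => ?_⟩
  calc |F i x * G i x| = |F i x| * |G i x| := abs_mul _ _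
    _ ≤ (C * (1 + ‖x‖) ^ m) * (D * (1 + ‖x‖) ^ n) := by gcongr; exacts [hF i x, hG i x]
    _ = C * D * (1 + ‖x‖) ^ (m + n) := by ring

lemma polyGrowth_comp {f : ℝ → ℝ} (hf : PolyGrowth f) (hF : UniformPolyGrowth F) :
    UniformPolyGrowth fun i x => f (F i x) := by
  obtain ⟨C, hC, m, hf⟩ := hf
  obtain ⟨D, hD, n, hF⟩ := hF
  refine ⟨C * (1 + D) ^ m, by positivity, n * m, fun i x => (hf _).trans ?_⟩
  have one_le : 1 ≤ (1 + ‖x‖) ^ n := one_le_pow₀ (by linarith [norm_nonneg x])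
  calc C * (1 + |F i x|) ^ m ≤ C * ((1 + D) * (1 + ‖x‖) ^ n) ^ m := by
        gcongr
        linarith [hF i x]
    _ = C * (1 + D) ^ m * (1 + ‖x‖) ^ (n * m) := by rw [mul_pow, ← pow_mul, mul_assoc]

variable [NormedSpace ℝ E] [CompleteSpace E] [SecondCountableTopology E]
  [MeasurableSpace E] [BorelSpace E]

lemma exists_integrable_bound (hF : UniformPolyGrowth F) (μ : Measure E) [IsGaussian μ] :
    ∃ bound : E → ℝ, Integrable bound μ ∧ ∀ i x, |F i x| ≤ bound x := by
  obtain ⟨C, -, m, hF⟩ := hF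
  have hnorm : MemLp (fun x : E => ‖x‖) m μ :=
    (IsGaussian.memLp_id μ m (ENNReal.natCast_ne_top m)).norm
  have hadd : MemLp (fun x : E => 1 + ‖x‖) m μ := (memLp_const (1 : ℝ)).add hnorm
  have hpow : Integrable (fun x : E => (1 + ‖x‖) ^ m) μ :=
    hadd.integrable_norm_pow'.congr <| ae_of_all _ fun x =>
      congrArg (· ^ m) (Real.norm_of_nonneg (add_nonneg zero_le_one (norm_nonneg x)))
  exact ⟨fun x => C * (1 + ‖x‖) ^ m, hpow.const_mul C, hF⟩

lemma integrable (hF : UniformPolyGrowth F) (μ : Measure E) [IsGaussian μ] {i : ι}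
    (hmeas : Measurable (F i)) : Integrable (F i) μ := by
  obtain ⟨bound, hbound, hle⟩ := hF.exists_integrable_bound μ
  exact hbound.mono' hmeas.aestronglyMeasurable (ae_of_all _ (hle i))

end UniformPolyGrowth

section Stein

variable {m : ℝ} {v : NNReal}

lemma integrable_gaussianReal_iff (hv : v ≠ 0) {h : ℝ → ℝ} :
    Integrable h (gaussianReal m v) ↔ Integrable fun x => h x * gaussianPDFReal m v x := by
  rw [gaussianReal_of_var_ne_zero m hv, integrable_withDensity_iff (measurable_gaussianPDF _ _)
    (ae_of_all _ fun _ => gaussianPDF_lt_top)]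
  simp only [toReal_gaussianPDF]

lemma hasDerivAt_gaussianPDFReal (m : ℝ) (v : NNReal) (x : ℝ) :
    HasDerivAt (gaussianPDFReal m v) (-((x - m) / v) * gaussianPDFReal m v x) x := by
  have hexponent : HasDerivAt (fun x : ℝ => -(x - m) ^ 2 / (2 * (v : ℝ))) (-((x - m) / v)) x := by
    refine ((((hasDerivAt_id' x).sub_const m).fun_pow 2).fun_neg.div_const _).congr_deriv ?_
    simp only [Nat.cast_ofNat, Nat.add_one_sub_one, pow_one, mul_one]
    rw [← mul_neg, mul_div_mul_left _ _ two_ne_zero, neg_div]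
  rw [gaussianPDFReal_def]
  refine (hexponent.exp.const_mul (√(2 * Real.pi * (v : ℝ)))⁻¹).congr_deriv ?_
  ring

theorem integral_sub_mul_gaussianReal {h h' : ℝ → ℝ} (hderiv : ∀ x, HasDerivAt h (h' x) x)
    (hint : Integrable h (gaussianReal m v)) (hint' : Integrable h' (gaussianReal m v))
    (hmul : Integrable (fun x => (x - m) * h x) (gaussianReal m v)) :
    ∫ x, (x - m) * h x ∂gaussianReal m v = v * ∫ x, h' x ∂gaussianReal m v := by
  rcases eq_or_ne v 0 with rfl | hv
  · simp
  have hv' : (v : ℝ) ≠ 0 := NNReal.coe_ne_zero.2 hv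
  rw [integrable_gaussianReal_iff hv] at hint hint' hmul
  have hmul_deriv (x : ℝ) : h x * (-((x - m) / v) * gaussianPDFReal m v x)
      = -(v : ℝ)⁻¹ * ((x - m) * h x * gaussianPDFReal m v x) := by ring
  have hparts : ∫ x, h x * (-((x - m) / v) * gaussianPDFReal m v x)
      = -∫ x, h' x * gaussianPDFReal m v x :=
    integral_mul_deriv_eq_deriv_mul_of_integrable (fun x _ => hderiv x)
      (fun x _ => hasDerivAt_gaussianPDFReal m v x)
      ((hmul.const_mul (-(v : ℝ)⁻¹)).congr (ae_of_all _ fun x => (hmul_deriv x).symm)) hint' hint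
  simp only [hmul_deriv, integral_const_mul] at hparts
  simp only [integral_gaussianReal_eq_integral_smul hv, smul_eq_mul,
    mul_comm (gaussianPDFReal m v _)]
  field_simp at hparts
  linarith

lemma integral_snd_sub_mul_prod_gaussianReal {α : Type*} [MeasurableSpace α] {ν : Measure α}
    [SFinite ν] {F F' : α × ℝ → ℝ} (hderiv : ∀ p, HasDerivAt (fun y => F (p.1, y)) (F' p) p.2)
    (hint : Integrable F (ν.prod (gaussianReal m v)))
    (hint' : Integrable F' (ν.prod (gaussianReal m v)))
    (hmul : Integrable (fun p => (p.2 - m) * F p) (ν.prod (gaussianReal m v))) :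
    ∫ p, (p.2 - m) * F p ∂ν.prod (gaussianReal m v)
      = v * ∫ p, F' p ∂ν.prod (gaussianReal m v) := by
  rw [integral_prod _ hmul, integral_prod _ hint', ← integral_const_mul]
  refine integral_congr_ae ?_
  filter_upwards [hint.prod_right_ae, hint'.prod_right_ae, hmul.prod_right_ae] with x hx hx' hxmul
  exact integral_sub_mul_gaussianReal (fun y => hderiv (x, y)) hx hx' hxmul

end Stein

section Rotation

variable {E : Type*} [NormedAddCommGroup E] [NormedSpace ℝ E]

lemma norm_rotation_le (θ : ℝ) (p : E × E) : ‖rotation θ p‖ ≤ 2 * ‖p‖ := by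
  have hle {a b : ℝ} (ha : |a| ≤ 1) (hb : |b| ≤ 1) : ‖a • p.1 + b • p.2‖ ≤ 2 * ‖p‖ :=
    calc ‖a • p.1 + b • p.2‖ ≤ |a| * ‖p.1‖ + |b| * ‖p.2‖ := by
          simpa only [norm_smul, Real.norm_eq_abs] using norm_add_le (a • p.1) (b • p.2)
      _ ≤ 1 * ‖p‖ + 1 * ‖p‖ := by gcongr; exacts [norm_fst_le p, norm_snd_le p]
      _ = 2 * ‖p‖ := by ring
  have hcos := Real.abs_cos_le_one θ
  have hsin := Real.abs_sin_le_one θ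
  exact norm_prod_le_iff.2 ⟨hle hcos hsin, hle ((abs_neg _).trans_le hsin) hcos⟩

lemma rotation_neg_rotation (θ : ℝ) (p : E × E) : rotation (-θ) (rotation θ p) = p := by
  have hsq := Real.cos_sq_add_sin_sq θ
  ext <;> simp only [ContinuousLinearMap.rotation_apply, Real.cos_neg, Real.sin_neg]
  · linear_combination (norm := module) hsq • p.1
  · linear_combination (norm := module) hsq • p.2

lemma hasDerivAt_rotation_fst (p : E × E) (θ : ℝ) :
    HasDerivAt (fun θ => (rotation θ p).1) (rotation θ p).2 θ :=
  ((Real.hasDerivAt_cos θ).smul_const p.1).add ((Real.hasDerivAt_sin θ).smul_const p.2)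

lemma integral_comp_rotation [CompleteSpace E] [SecondCountableTopology E] [MeasurableSpace E]
    [BorelSpace E] {μ : Measure E} [IsGaussian μ] (hμ : μ[id] = 0) {F : Type*}
    [NormedAddCommGroup F] [NormedSpace ℝ F] {H : E × E → F} (hH : StronglyMeasurable H) (θ : ℝ) :
    ∫ p, H (rotation θ p) ∂μ.prod μ = ∫ q, H q ∂μ.prod μ := by
  rw [← integral_map (by fun_prop) hH.aestronglyMeasurable, IsGaussian.map_rotation_eq_self hμ θ]

lemma uniformPolyGrowth_fst {ι : Type*} : UniformPolyGrowth fun (_ : ι) (p : ℝ × ℝ) => p.1 :=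
  .of_abs_le_mul_norm (K := 1) fun _ p => (norm_fst_le p).trans_eq (one_mul _).symm

lemma uniformPolyGrowth_snd {ι : Type*} : UniformPolyGrowth fun (_ : ι) (p : ℝ × ℝ) => p.2 :=
  .of_abs_le_mul_norm (K := 1) fun _ p => (norm_snd_le p).trans_eq (one_mul _).symm

lemma uniformPolyGrowth_rotation_fst :
    UniformPolyGrowth fun θ (p : ℝ × ℝ) => (rotation θ p).1 :=
  .of_abs_le_mul_norm fun θ p => (norm_fst_le _).trans (norm_rotation_le θ p)

lemma uniformPolyGrowth_rotation_snd :
    UniformPolyGrowth fun θ (p : ℝ × ℝ) => (rotation θ p).2 :=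
  .of_abs_le_mul_norm fun θ p => (norm_snd_le _).trans (norm_rotation_le θ p)

end Rotation

local notation "γ₂" => Measure.prod (gaussianReal 0 1) (gaussianReal 0 1)

/-- The correlation `E[f(X) g(cos θ X + sin θ Y)]` of `f` and `g` under a standard Gaussian pair
`(X, Y)`. It is parametrized by the angle `θ`, not by `ρ = cos θ`, because the integrand is then
differentiable in the parameter everywhere, with uniform polynomial growth. -/
noncomputable def gaussianCorr (f g : ℝ → ℝ) (θ : ℝ) : ℝ :=
  ∫ p, f p.1 * g (rotation θ p).1 ∂γ₂

section GaussianCorr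

variable {f g : ℝ → ℝ}

lemma uniformPolyGrowth_mul_rotation (hf : PolyGrowth f) (hg : PolyGrowth g) :
    UniformPolyGrowth fun θ (p : ℝ × ℝ) => f p.1 * g (rotation θ p).1 :=
  (uniformPolyGrowth_fst.polyGrowth_comp hf).mul (uniformPolyGrowth_rotation_fst.polyGrowth_comp hg)

lemma hasDerivAt_gaussianCorr_integral (hf : Measurable f) (hg : Differentiable ℝ g)
    (hfgrowth : PolyGrowth f) (hggrowth : PolyGrowth g) (hggrowth' : PolyGrowth (deriv g)) (θ : ℝ) :
    HasDerivAt (gaussianCorr f g)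
      (∫ p, f p.1 * deriv g (rotation θ p).1 * (rotation θ p).2 ∂γ₂) θ := by
  have hgmeas : Measurable g := hg.continuous.measurable
  have hmeas (θ : ℝ) : Measurable fun p : ℝ × ℝ => f p.1 * g (rotation θ p).1 := by fun_prop
  have hmeas' : Measurable fun p : ℝ × ℝ =>
      f p.1 * deriv g (rotation θ p).1 * (rotation θ p).2 := by fun_prop
  obtain ⟨bound, hbound, hle⟩ := ((uniformPolyGrowth_mul_rotation hfgrowth hggrowth').mul
    uniformPolyGrowth_rotation_snd).exists_integrable_bound γ₂
  refine (hasDerivAt_integral_of_dominated_loc_of_deriv_le Filter.univ_mem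
    (.of_forall fun θ => (hmeas θ).aestronglyMeasurable)
    ((uniformPolyGrowth_mul_rotation hfgrowth hggrowth).integrable γ₂ (hmeas θ))
    hmeas'.aestronglyMeasurable (ae_of_all _ fun p θ _ => hle θ p) hbound
    (ae_of_all _ fun p θ _ => ?_)).2
  rw [mul_assoc]
  exact ((hg _).hasDerivAt.comp θ (hasDerivAt_rotation_fst p θ)).const_mul (f p.1)

lemma gaussianCorr_neg (hf : Measurable f) (hg : Measurable g) (θ : ℝ) :
    gaussianCorr f g (-θ) = gaussianCorr g f θ := by
  rw [gaussianCorr, ← integral_comp_rotation integral_id_gaussianReal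
    (Measurable.stronglyMeasurable (by fun_prop)) θ]
  simp only [rotation_neg_rotation, gaussianCorr, mul_comm]

lemma integral_snd_mul_rotation_fst (hf : Measurable f) (hg : Differentiable ℝ g)
    (hfgrowth : PolyGrowth f) (hggrowth : PolyGrowth g) (hggrowth' : PolyGrowth (deriv g)) (θ : ℝ) :
    ∫ q, q.2 * (f q.1 * g (rotation θ q).1) ∂γ₂ = Real.sin θ * gaussianCorr f (deriv g) θ := by
  have hgmeas : Measurable g := hg.continuous.measurable
  have hgrowth := uniformPolyGrowth_mul_rotation hfgrowth hggrowth
  have hint := hgrowth.integrable γ₂ (i := θ) (by fun_prop)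
  have hint_deriv := ((uniformPolyGrowth_mul_rotation hfgrowth hggrowth').integrable γ₂
    (i := θ) (by fun_prop)).const_mul (Real.sin θ)
  have hint_mul := (uniformPolyGrowth_snd.mul hgrowth).integrable γ₂ (i := θ) (by fun_prop)
  have hderiv (q : ℝ × ℝ) : HasDerivAt (fun y => f q.1 * g (rotation θ (q.1, y)).1)
      (Real.sin θ * (f q.1 * deriv g (rotation θ q).1)) q.2 := by
    have hrot : HasDerivAt (fun y => (rotation θ (q.1, y)).1) (Real.sin θ) q.2 :=
      (((hasDerivAt_id q.2).const_mul (Real.sin θ)).const_add (Real.cos θ * q.1)).congr_deriv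
        (mul_one _)
    refine (((hg _).hasDerivAt.comp q.2 hrot).const_mul (f q.1)).congr_deriv ?_
    ring
  simpa only [gaussianCorr, sub_zero, NNReal.coe_one, one_mul, integral_const_mul] using
    integral_snd_sub_mul_prod_gaussianReal (m := 0) (v := 1) hderiv hint hint_deriv
      (by simpa only [sub_zero] using hint_mul)

lemma integral_mul_rotation_snd (hf : Differentiable ℝ f) (hg : Measurable g)
    (hfgrowth : PolyGrowth f) (hfgrowth' : PolyGrowth (deriv f)) (hggrowth : PolyGrowth g) (θ : ℝ) :
    ∫ p, f p.1 * g (rotation θ p).1 * (rotation θ p).2 ∂γ₂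
      = -Real.sin θ * gaussianCorr (deriv f) g θ := by
  have hfmeas : Measurable f := hf.continuous.measurable
  have hrotate := integral_comp_rotation (H := fun q => q.2 * (g q.1 * f (rotation (-θ) q).1))
    (integral_id_gaussianReal (μ := 0) (v := 1)) (Measurable.stronglyMeasurable (by fun_prop)) θ
  simp only [rotation_neg_rotation] at hrotate
  calc ∫ p, f p.1 * g (rotation θ p).1 * (rotation θ p).2 ∂γ₂
      = ∫ p, (rotation θ p).2 * (g (rotation θ p).1 * f p.1) ∂γ₂ := by
        simp only [mul_comm]
    _ = ∫ q, q.2 * (g q.1 * f (rotation (-θ) q).1) ∂γ₂ := hrotate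
    _ = Real.sin (-θ) * gaussianCorr g (deriv f) (-θ) :=
        integral_snd_mul_rotation_fst hg hf hggrowth hfgrowth hfgrowth' (-θ)
    _ = -Real.sin θ * gaussianCorr (deriv f) g θ := by
        rw [Real.sin_neg, gaussianCorr_neg hg (measurable_deriv f)]

theorem hasDerivAt_gaussianCorr (hf : Differentiable ℝ f) (hg : Differentiable ℝ g)
    (hfgrowth : PolyGrowth f) (hfgrowth' : PolyGrowth (deriv f))
    (hggrowth : PolyGrowth g) (hggrowth' : PolyGrowth (deriv g)) (θ : ℝ) :
    HasDerivAt (gaussianCorr f g) (-Real.sin θ * gaussianCorr (deriv f) (deriv g) θ) θ := by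
  rw [← integral_mul_rotation_snd hf (measurable_deriv g) hfgrowth hfgrowth' hggrowth' θ]
  exact hasDerivAt_gaussianCorr_integral hf.continuous.measurable hg hfgrowth hggrowth hggrowth' θ

lemma phiCorr_eq_gaussianCorr_arccos (hg : Measurable g) (hgrowth : PolyGrowth g) {ρ : ℝ}
    (hρ : ρ ∈ Set.Icc (-1) 1) : phiCorr g ρ = gaussianCorr g g (Real.arccos ρ) := by
  have hint := (uniformPolyGrowth_mul_rotation hgrowth hgrowth).integrable γ₂
    (i := Real.arccos ρ) (by fun_prop)
  rw [gaussianCorr, integral_prod _ hint]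
  simp only [phiCorr, ContinuousLinearMap.rotation_apply, Real.cos_arccos hρ.1 hρ.2,
    Real.sin_arccos, smul_eq_mul]

theorem hasDerivAt_phiCorr (hg : Differentiable ℝ g) (hgrowth : PolyGrowth g)
    (hgrowth' : PolyGrowth (deriv g)) {ρ : ℝ} (hρ : ρ ∈ Set.Ioo (-1) 1) :
    HasDerivAt (phiCorr g) (phiCorr (deriv g) ρ) ρ := by
  have hcomp : HasDerivAt (fun t => gaussianCorr g g (Real.arccos t)) (phiCorr (deriv g) ρ) ρ := by
    refine ((hasDerivAt_gaussianCorr hg hg hgrowth hgrowth' hgrowth hgrowth' _).comp ρ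
      (Real.hasDerivAt_arccos hρ.1.ne' hρ.2.ne)).congr_deriv ?_
    have hpos : 0 < √(1 - ρ ^ 2) := Real.sqrt_pos.2 (by nlinarith [hρ.1, hρ.2])
    rw [phiCorr_eq_gaussianCorr_arccos (measurable_deriv g) hgrowth' (Set.Ioo_subset_Icc_self hρ),
      Real.sin_arccos]
    field_simp
  refine hcomp.congr_of_eventuallyEq ?_
  filter_upwards [Icc_mem_nhds hρ.1 hρ.2] with t ht
  exact phiCorr_eq_gaussianCorr_arccos hg.continuous.measurable hgrowth ht

end GaussianCorr

lemma iteratedDeriv_eqOn_of_hasDerivAt_succ {𝕜 F : Type*} [NontriviallyNormedField 𝕜]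
    [NormedAddCommGroup F] [NormedSpace 𝕜 F] {Φ : ℕ → 𝕜 → F} {s : Set 𝕜} (hs : IsOpen s) {k : ℕ}
    (hΦ : ∀ i < k, ∀ x ∈ s, HasDerivAt (Φ i) (Φ (i + 1) x) x) :
    ∀ i ≤ k, Set.EqOn (iteratedDeriv i (Φ 0)) (Φ i) s := by
  intro i hi
  induction i with
  | zero => exact fun x _ => congrFun iteratedDeriv_zero x
  | succ i ih =>
    intro x hx
    rw [iteratedDeriv_succ, ((ih (by lia)).eventuallyEq_of_mem (hs.mem_nhds hx)).deriv_eq]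
    exact (hΦ i hi x hx).deriv

theorem phiCorr_iteratedDeriv_general (k : ℕ) (g : ℝ → ℝ)
    (hg : ∀ i < k, Differentiable ℝ (iteratedDeriv i g))
    (hgrowth : ∀ i ≤ k, PolyGrowth (iteratedDeriv i g)) :
    (∀ ρ ∈ Set.Ioo (-1 : ℝ) 1, ∀ i < k, DifferentiableAt ℝ (iteratedDeriv i (phiCorr g)) ρ) ∧
    (∀ ρ ∈ Set.Ioo (-1 : ℝ) 1,
      iteratedDeriv k (phiCorr g) ρ = phiCorr (iteratedDeriv k g) ρ) := by
  have hderiv (i : ℕ) (hi : i < k) (ρ : ℝ) (hρ : ρ ∈ Set.Ioo (-1) 1) :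
      HasDerivAt (phiCorr (iteratedDeriv i g)) (phiCorr (iteratedDeriv (i + 1) g) ρ) ρ := by
    have hgrowth' := hgrowth (i + 1) hi
    rw [iteratedDeriv_succ] at hgrowth' ⊢
    exact hasDerivAt_phiCorr (hg i hi) (hgrowth i hi.le) hgrowth' hρ
  have heqOn (i : ℕ) (hi : i ≤ k) :
      Set.EqOn (iteratedDeriv i (phiCorr g)) (phiCorr (iteratedDeriv i g)) (Set.Ioo (-1) 1) := by
    simpa only [iteratedDeriv_zero] using
      iteratedDeriv_eqOn_of_hasDerivAt_succ isOpen_Ioo hderiv i hi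
  refine ⟨fun ρ hρ i hi => ?_, heqOn k le_rfl⟩
  exact ((hderiv i hi ρ hρ).congr_of_eventuallyEq
    ((heqOn i hi.le).eventuallyEq_of_mem (isOpen_Ioo.mem_nhds hρ))).differentiableAt

theorem phiCorr_iteratedDeriv (k : ℕ) (hk : 1 ≤ k) (g : ℝ → ℝ)
    (hg : ContDiff ℝ (k + 1 : ℕ) g)
    (hgrowth : ∀ i ≤ k + 1, PolyGrowth (iteratedDeriv i g)) :
    (∀ ρ ∈ Set.Ioo (-1 : ℝ) 1, ∀ i < k, DifferentiableAt ℝ (iteratedDeriv i (phiCorr g)) ρ) ∧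
    (∀ ρ ∈ Set.Ioo (-1 : ℝ) 1,
      iteratedDeriv k (phiCorr g) ρ =
        ∫ x, ∫ y, iteratedDeriv k g x * iteratedDeriv k g (ρ * x + Real.sqrt (1 - ρ ^ 2) * y)
          ∂(gaussianReal 0 1) ∂(gaussianReal 0 1)) :=
  phiCorr_iteratedDeriv_general k g
    (fun i hi => hg.differentiable_iteratedDeriv i (by exact_mod_cast hi.trans k.lt_succ_self))
    fun i hi => hgrowth i (hi.trans k.le_succ)
end

section
/- (Optimality of the antithetic coupling for one-dimensional Black–Scholes with constant correlation.) Let b ∈ ℝ, σ > 0, T > 0, and let f : ℝ → ℝ be nondecreasing and twice continuously differentiable such that the function g(x) = f(exp((b − σ²/2)T + σ√T · x)) together with g' and g'' has at most polynomial growth. For ρ ∈ [−1,1] define Φ(ρ) = ∫∫ f(exp((b − σ²/2)T + σ√T x)) · f(exp((b − σ²/2)T + σ√T (ρx + √(1−ρ²) y))) dγ(x) dγ(y). Then Φ(−1) ≤ Φ(ρ) for every ρ ∈ [−1,1], i.e. the constant correlation ρ* = −1 minimizes Φ over [−1,1]. -/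
/-!
For a monotone `g` the pair `(g x, g (-x))` is countermonotone, so the rearrangement inequality at
the points `x` and `-z` reads
`g x * g (-x) + g z * g (-z) ≤ g x * g z + g (-x) * g (-z)`.
If `X` and `Z` have the same law and `(X, Z)` and `(-X, -Z)` are equal in law, taking expectations
gives `2 E[g(X) g(-X)] ≤ 2 E[g(X) g(Z)]`. Correlated centered Gaussian variables of equal variance
form such a pair, and a Black–Scholes price is a monotone function of its Gaussian driver.
-/

open MeasureTheory ProbabilityTheory

/-- `Φ(ρ) = E[f(X¹_T) f(X²_T)]` for two Black–Scholes prices driven by Brownian motions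
with constant correlation `ρ`. -/
noncomputable def PhiBS (b σ T : ℝ) (f : ℝ → ℝ) (ρ : ℝ) : ℝ :=
  ∫ x, ∫ y, f (Real.exp ((b - σ ^ 2 / 2) * T + σ * Real.sqrt T * x)) *
      f (Real.exp ((b - σ ^ 2 / 2) * T + σ * Real.sqrt T * (ρ * x + Real.sqrt (1 - ρ ^ 2) * y)))
    ∂(gaussianReal 0 1) ∂(gaussianReal 0 1)

open scoped NNReal

section Antithetic

variable {Ω α : Type*} [MeasurableSpace Ω] [MeasurableSpace α]

instance isNegInvariant_prod [Neg Ω] [Neg α] [MeasurableNeg Ω] [MeasurableNeg α]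
    {μ : Measure Ω} {ν : Measure α} [SFinite μ] [SFinite ν]
    [μ.IsNegInvariant] [ν.IsNegInvariant] : (μ.prod ν).IsNegInvariant where
  neg_eq_self :=
    ((Measure.measurePreserving_neg μ).prod (Measure.measurePreserving_neg ν)).map_eq

lemma isNegInvariant_of_hasLaw_odd [Neg Ω] [MeasurableNeg Ω] [Neg α] [MeasurableNeg α]
    {P : Measure Ω} [P.IsNegInvariant] {μ : Measure α} {X : Ω → α}
    (hX : HasLaw X μ P) (hX_odd : ∀ ω, X (-ω) = -X ω) : μ.IsNegInvariant where
  neg_eq_self := by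
    have h_reflect : HasLaw (fun ω ↦ X (-ω)) μ P :=
      hX.fun_comp (Measure.measurePreserving_neg P).hasLaw
    have h_map : P.map (fun ω ↦ -X ω) = μ := by simpa only [hX_odd] using h_reflect.map_eq
    calc μ.map Neg.neg = (P.map X).map Neg.neg := by rw [hX.map_eq]
      _ = P.map (fun ω ↦ -X ω) :=
        AEMeasurable.map_map_of_aemeasurable measurable_neg.aemeasurable hX.aemeasurable
      _ = μ := h_map

-- Joint symmetry of `(X, Z)` is encoded by making both odd functions of a symmetric noise `ω`.
theorem integral_mul_comp_neg_le [AddGroup Ω] [MeasurableNeg Ω] [InvolutiveNeg α]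
    [MeasurableNeg α] {P : Measure Ω} [P.IsNegInvariant] {μ : Measure α} {X Z : Ω → α}
    (hX : HasLaw X μ P) (hZ : HasLaw Z μ P) (hX_odd : ∀ ω, X (-ω) = -X ω)
    (hZ_odd : ∀ ω, Z (-ω) = -Z ω) {g : α → ℝ} (hg : Antivary g fun x ↦ g (-x))
    (hg_sq : MemLp g 2 μ) :
    ∫ x, g x * g (-x) ∂μ ≤ ∫ ω, g (X ω) * g (Z ω) ∂P := by
  have := isNegInvariant_of_hasLaw_odd hX hX_odd
  have h_anti : Integrable (fun x ↦ g x * g (-x)) μ :=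
    hg_sq.integrable_mul (hg_sq.comp_measurePreserving (Measure.measurePreserving_neg μ))
  have law_anti {Y : Ω → α} (hY : HasLaw Y μ P) :
      Integrable (fun ω ↦ g (Y ω) * g (-Y ω)) P ∧
        ∫ ω, g (Y ω) * g (-Y ω) ∂P = ∫ x, g x * g (-x) ∂μ :=
    ⟨(hY.map_eq ▸ h_anti).comp_aemeasurable hY.aemeasurable, hY.integral_comp h_anti.1⟩
  have h_pair : Integrable (fun ω ↦ g (X ω) * g (Z ω)) P :=
    ((hX.map_eq ▸ hg_sq).comp_of_map hX.aemeasurable).integrable_mul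
      ((hZ.map_eq ▸ hg_sq).comp_of_map hZ.aemeasurable)
  have h_pair_neg : Integrable (fun ω ↦ g (-X ω) * g (-Z ω)) P := by
    simpa only [hX_odd, hZ_odd] using h_pair.comp_neg
  have h_symm : ∫ ω, g (-X ω) * g (-Z ω) ∂P = ∫ ω, g (X ω) * g (Z ω) ∂P := by
    simpa only [hX_odd, hZ_odd] using integral_neg_eq_self (fun ω ↦ g (X ω) * g (Z ω)) P
  have h_rearrange (ω : Ω) : g (X ω) * g (-X ω) + g (Z ω) * g (-Z ω) ≤
      g (X ω) * g (Z ω) + g (-X ω) * g (-Z ω) := by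
    have := hg.mul_add_mul_le_mul_add_mul (X ω) (-Z ω)
    rw [neg_neg] at this
    linarith
  have h_mono : ∫ ω, (g (X ω) * g (-X ω) + g (Z ω) * g (-Z ω)) ∂P ≤
      ∫ ω, (g (X ω) * g (Z ω) + g (-X ω) * g (-Z ω)) ∂P :=
    integral_mono ((law_anti hX).1.add (law_anti hZ).1) (h_pair.add h_pair_neg) h_rearrange
  rw [integral_add (law_anti hX).1 (law_anti hZ).1, integral_add h_pair h_pair_neg,
    (law_anti hX).2, (law_anti hZ).2, h_symm] at h_mono
  linarith

end Antithetic

section Gaussian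

instance isNegInvariant_gaussianReal_zero (v : ℝ≥0) : (gaussianReal 0 v).IsNegInvariant where
  neg_eq_self := gaussianReal_map_neg.trans (by rw [neg_zero])

lemma hasLaw_gaussianReal_of_sq_add_sq_eq_one {v : ℝ≥0} {a b : ℝ} (hab : a ^ 2 + b ^ 2 = 1) :
    HasLaw (fun p : ℝ × ℝ ↦ a * p.1 + b * p.2) (gaussianReal 0 v)
      ((gaussianReal 0 v).prod (gaussianReal 0 v)) where
  map_eq := by
    have h_indep := indepFun_prod (μ := gaussianReal 0 v) (ν := gaussianReal 0 v)
      (X := fun x ↦ a * x) (Y := fun y ↦ b * y) (by fun_prop) (by fun_prop)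
    have h_fst := gaussianReal_const_mul (measurePreserving_fst
      (μ := gaussianReal 0 v) (ν := gaussianReal 0 v)).hasLaw a
    have h_snd := gaussianReal_const_mul (measurePreserving_snd
      (μ := gaussianReal 0 v) (ν := gaussianReal 0 v)).hasLaw b
    refine (gaussianReal_add_gaussianReal_of_indepFun h_indep h_fst.map_eq h_snd.map_eq).trans ?_
    congr 1
    · ring
    · ext
      push_cast
      rw [← add_mul, hab, one_mul]

theorem integral_gaussianReal_mul_comp_neg_le {v : ℝ≥0} {g : ℝ → ℝ}
    (hg : Antivary g fun x ↦ g (-x)) (hg_sq : MemLp g 2 (gaussianReal 0 v))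
    {a b : ℝ} (hab : a ^ 2 + b ^ 2 = 1) :
    ∫ x, g x * g (-x) ∂(gaussianReal 0 v) ≤
      ∫ x, ∫ y, g x * g (a * x + b * y) ∂(gaussianReal 0 v) ∂(gaussianReal 0 v) := by
  have h_fst := measurePreserving_fst (μ := gaussianReal 0 v) (ν := gaussianReal 0 v)
  have h_rot := (hasLaw_gaussianReal_of_sq_add_sq_eq_one (v := v) hab).measurePreserving
    (by fun_prop)
  have h_int : Integrable (fun p : ℝ × ℝ ↦ g p.1 * g (a * p.1 + b * p.2))
      ((gaussianReal 0 v).prod (gaussianReal 0 v)) :=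
    (hg_sq.comp_measurePreserving h_fst).integrable_mul (hg_sq.comp_measurePreserving h_rot)
  calc ∫ x, g x * g (-x) ∂(gaussianReal 0 v)
      ≤ ∫ p, g p.1 * g (a * p.1 + b * p.2) ∂((gaussianReal 0 v).prod (gaussianReal 0 v)) :=
        integral_mul_comp_neg_le h_fst.hasLaw h_rot.hasLaw (fun _ ↦ rfl)
          (fun p ↦ by simp only [Prod.fst_neg, Prod.snd_neg]; ring) hg hg_sq
    _ = _ := integral_prod _ h_int

end Gaussian

lemma PolyGrowth.memLp {h : ℝ → ℝ} (hh : PolyGrowth h) {μ : Measure ℝ} [IsFiniteMeasure μ]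
    (h_meas : AEStronglyMeasurable h μ) (h_moments : ∀ p : ℝ≥0, MemLp id p μ) (p : ℝ≥0) :
    MemLp h p μ := by
  obtain ⟨C, hC, m, h_bound⟩ := hh
  -- The degree is raised to `m + 1` because `‖·‖ ^ q` maps `L^(p * q)` to `L^p` only for `q ≠ 0`.
  have h_abs : MemLp (fun x : ℝ ↦ |x|) (p * (m + 1 : ℕ)) μ :=
    mod_cast (h_moments (p * (m + 1 : ℕ))).abs
  have h_base : MemLp (fun x : ℝ ↦ 1 + |x|) (p * (m + 1 : ℕ)) μ := (memLp_const (1 : ℝ)).add h_abs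
  have h_pow : MemLp (fun x : ℝ ↦ ‖1 + |x|‖ ^ (m + 1)) p μ := by
    have := h_base.norm_rpow_div (m + 1 : ℕ)
    rw [ENNReal.mul_div_cancel_right (Nat.cast_ne_zero.2 m.succ_ne_zero)
      (ENNReal.natCast_ne_top _)] at this
    simpa only [ENNReal.toReal_natCast, Real.rpow_natCast] using this
  refine (h_pow.const_mul C).mono' h_meas (.of_forall fun x ↦ ?_)
  have h_one_le : 1 ≤ 1 + |x| := le_add_of_nonneg_right (abs_nonneg x)
  calc ‖h x‖ ≤ C * (1 + |x|) ^ m := h_bound x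
    _ ≤ C * (1 + |x|) ^ (m + 1) := by gcongr; exact m.le_succ
    _ = C * ‖1 + |x|‖ ^ (m + 1) := by rw [Real.norm_of_nonneg (zero_le_one.trans h_one_le)]

lemma PolyGrowth.memLp_gaussianReal {h : ℝ → ℝ} (hh : PolyGrowth h) {m : ℝ} {v : ℝ≥0}
    (h_meas : AEStronglyMeasurable h (gaussianReal m v)) (p : ℝ≥0) :
    MemLp h p (gaussianReal m v) :=
  hh.memLp h_meas memLp_id_gaussianReal p

lemma antivary_comp_affine_neg {R β : Type*} [Ring R] [LinearOrder R] [IsOrderedRing R]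
    [Preorder β] {F : R → β} (hF : Monotone F) (a c : R) :
    Antivary (fun x ↦ F (a + c * x)) fun x ↦ F (a + c * -x) := by
  rcases le_total 0 c with hc | hc
  · have h_mono : Monotone fun x ↦ F (a + c * x) := fun x y hxy ↦ hF (by gcongr)
    exact h_mono.antivary (h_mono.comp_antitone fun _ _ ↦ neg_le_neg)
  · have h_anti : Antitone fun x ↦ F (a + c * x) := fun x y hxy ↦
      hF (add_le_add_right (mul_le_mul_of_nonpos_left hxy hc) a)
    exact h_anti.antivary (h_anti.comp fun _ _ ↦ neg_le_neg)

theorem antithetic_optimal_blackScholes_general (b σ : ℝ) (T : ℝ≥0) {f : ℝ → ℝ}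
    (hf : MonotoneOn f (Set.Ioi 0))
    (hf_sq : MemLp (fun x ↦ f (Real.exp ((b - σ ^ 2 / 2) * T + σ * Real.sqrt T * x))) 2
      (gaussianReal 0 1)) :
    ∀ ρ ∈ Set.Icc (-1 : ℝ) 1, PhiBS b σ T f (-1) ≤ PhiBS b σ T f ρ := by
  intro ρ hρ
  have h_mono : Monotone fun x ↦ f (Real.exp x) := fun x y hxy ↦
    hf (Real.exp_pos x) (Real.exp_pos y) (Real.exp_le_exp.2 hxy)
  have h_unit : ρ ^ 2 + Real.sqrt (1 - ρ ^ 2) ^ 2 = 1 := by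
    rw [Real.sq_sqrt (by nlinarith [hρ.1, hρ.2])]
    ring
  have h_le := integral_gaussianReal_mul_comp_neg_le
    (antivary_comp_affine_neg h_mono ((b - σ ^ 2 / 2) * T) (σ * Real.sqrt T)) hf_sq h_unit
  simpa [PhiBS] using h_le

theorem antithetic_optimal_blackScholes (b σ T : ℝ) (hσ : 0 < σ) (hT : 0 < T)
    (f : ℝ → ℝ) (hfmono : Monotone f) (hf : ContDiff ℝ 2 f)
    (h0 : PolyGrowth (fun x => f (Real.exp ((b - σ ^ 2 / 2) * T + σ * Real.sqrt T * x))))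
    (h1 : PolyGrowth (deriv (fun x => f (Real.exp ((b - σ ^ 2 / 2) * T + σ * Real.sqrt T * x)))))
    (h2 : PolyGrowth (deriv (deriv
      (fun x => f (Real.exp ((b - σ ^ 2 / 2) * T + σ * Real.sqrt T * x)))))) :
    ∀ ρ ∈ Set.Icc (-1 : ℝ) 1, PhiBS b σ T f (-1) ≤ PhiBS b σ T f ρ :=
  antithetic_optimal_blackScholes_general b σ ⟨T, hT.le⟩ (hfmono.monotoneOn _)
    (h0.memLp_gaussianReal (hf.continuous.comp (by fun_prop)).aestronglyMeasurable 2)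
end
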